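/- Let Ω ⊂ ℝ^n be a bounded Lipschitz domain and s ∈ (0,1). Then there exists no continuous function u : ℝ^n → ℝ satisfying both u(x) = 0 for every x ∈ ℝ^n\Ω and the overdetermined nonlocal Neumann condition Ñ_s u(x) = 1 for every x ∈ ℝ^n\closure(Ω). -/

import Mathlib

/-!
The weights `|x - y|^{-n-2s} dy` on `Ω`, normalized to total mass one, concentrate at a suitable
boundary point `p` as `x → p` from outside `closure Ω`. Since `u` vanishes outside `Ω`, the
quantity `Ñ_s u (x)` is minus the weighted mean of `u`, so it would tend to `-u p = 0`, which
contradicts `Ñ_s u = 1`.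

The point `p` is a point of `Ωᶜ` nearest to some `y₀ ∈ Ω`, so that `Ω` contains a ball with `p` on
its boundary. This ball contains balls of radius `t` whose centres are at distance `t` from `p`,
and hence the mass of the kernel is at least a constant times `t ^ (-2s)` whenever
`dist x p < t` (`kernel_mass_lower`). The Lipschitz graph condition is used only to see that `p` is
a limit of exterior points (`exists_exterior_near`). On the other hand `Ñ_s u (x) = 1` and the
continuity of `u` at `p` bound the mass uniformly for `x` near `p` (`kernel_mass_upper`).
-/


open MeasureTheory Filter Set Bornology
open scoped Topology ENNReal NNReal Pointwise symmDiff

noncomputable section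

/-- `ℝ^n` as a Euclidean space. -/
abbrev En (n : ℕ) := EuclideanSpace ℝ (Fin n)

/-- The normalization constant `c_{n,s}` of the fractional Laplacian. -/
def cns (n : ℕ) (s : ℝ) : ℝ :=
  4 ^ s * Real.Gamma ((n : ℝ) / 2 + s) / (Real.pi ^ ((n : ℝ) / 2) * |Real.Gamma (-s)|)

/-- `Q(Ω) = ℝ^{2n} \ (CΩ × CΩ)`. -/
def Qset (n : ℕ) (Ω : Set (En n)) : Set (En n × En n) := (Ωᶜ ×ˢ Ωᶜ)ᶜ

/-- The kernel `|x-y|^{n+2s}`. -/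
def nsKer (n : ℕ) (s : ℝ) (x y : En n) : ℝ := dist x y ^ ((n : ℝ) + 2 * s)

/-- The nonlocal normal derivative `N_s u (x) = c_{n,s} ∫_Ω (u x - u y)/|x-y|^{n+2s} dy`. -/
def NsD (n : ℕ) (s : ℝ) (Ω : Set (En n)) (u : En n → ℝ) (x : En n) : ℝ :=
  cns n s * ∫ y in Ω, (u x - u y) / nsKer n s x y

/-- The renormalized nonlocal normal derivative `Ñ_s u`. -/
def NsTilde (n : ℕ) (s : ℝ) (Ω : Set (En n)) (u : En n → ℝ) (x : En n) : ℝ :=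
  NsD n s Ω u x / (cns n s * ∫ y in Ω, (nsKer n s x y)⁻¹)

/-- The fractional Laplacian `(-Δ)^s u (x)`, defined as a principal value. -/
def fracLap (n : ℕ) (s : ℝ) (u : En n → ℝ) (x : En n) : ℝ :=
  cns n s * limUnder (𝓝[>] (0 : ℝ))
    (fun ε => ∫ y in {y : En n | ε ≤ dist x y}, (u x - u y) / nsKer n s x y)

/-- The Gagliardo-type bilinear form over `Q(Ω)`. -/
def gagliardo2 (n : ℕ) (s : ℝ) (Ω : Set (En n)) (u v : En n → ℝ) : ℝ :=
  ∫ p in Qset n Ω, (u p.1 - u p.2) * (v p.1 - v p.2) / nsKer n s p.1 p.2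

/-- Membership in the space `H^s_{Ω,g}`. -/
def InHs (n : ℕ) (s : ℝ) (Ω : Set (En n)) (g : En n → ℝ) (u : En n → ℝ) : Prop :=
  Measurable u ∧
  IntegrableOn (fun x => u x ^ 2) Ω ∧
  IntegrableOn (fun x => |g x| * u x ^ 2) Ωᶜ ∧
  IntegrableOn (fun p : En n × En n => (u p.1 - u p.2) ^ 2 / nsKer n s p.1 p.2) (Qset n Ω)

/-- The squared norm of `H^s_{Ω,g}`. -/
def hsNormSq (n : ℕ) (s : ℝ) (Ω : Set (En n)) (g : En n → ℝ) (u : En n → ℝ) : ℝ :=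
  (∫ x in Ω, u x ^ 2) + (∫ x in Ωᶜ, |g x| * u x ^ 2) + gagliardo2 n s Ω u u

/-- The scalar product of `H^s_{Ω,g}`. -/
def hsInner (n : ℕ) (s : ℝ) (Ω : Set (En n)) (g : En n → ℝ) (u v : En n → ℝ) : ℝ :=
  (∫ x in Ω, u x * v x) + (∫ x in Ωᶜ, |g x| * (u x * v x)) + gagliardo2 n s Ω u v

/-- `u` is a weak solution of `(-Δ)^s u = f` in `Ω`, `N_s u = g` in `ℝ^n \ Ω̄`. -/
def IsWeakSol (n : ℕ) (s : ℝ) (Ω : Set (En n)) (f g : En n → ℝ) (u : En n → ℝ) : Prop :=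
  InHs n s Ω (fun _ => 0) u ∧
  ∀ v : En n → ℝ, InHs n s Ω g v →
    cns n s / 2 * gagliardo2 n s Ω u v = (∫ x in Ω, f x * v x) + ∫ x in Ωᶜ, g x * v x

/-- Last coordinate of a point of `ℝ^n`. -/
def lastCoord {n : ℕ} (x : En n) : ℝ :=
  if h : 0 < n then x ⟨n - 1, Nat.sub_lt h Nat.one_pos⟩ else 0

/-- The first `n-1` coordinates of a point of `ℝ^n`. -/
def frontCoords {n : ℕ} (x : En n) : EuclideanSpace ℝ (Fin (n - 1)) :=
  (WithLp.equiv 2 (Fin (n - 1) → ℝ)).symm fun i => x (Fin.castLE (Nat.sub_le n 1) i)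

/-- A bounded Lipschitz domain: open, bounded, nonempty, and near each boundary point the
domain is (up to a rigid motion) the subgraph of a Lipschitz function. -/
def IsLipschitzDomain (n : ℕ) (Ω : Set (En n)) : Prop :=
  IsOpen Ω ∧ IsBounded Ω ∧ Ω.Nonempty ∧
  ∀ p ∈ frontier Ω, ∃ (φ : En n ≃ᵢ En n) (γ : EuclideanSpace ℝ (Fin (n - 1)) → ℝ)
    (L : ℝ≥0) (r : ℝ), 0 < r ∧ LipschitzWith L γ ∧ φ p = 0 ∧
    (φ '' Ω) ∩ Metric.ball 0 r = {x : En n | lastCoord x < γ (frontCoords x)} ∩ Metric.ball 0 r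

/-- A bounded domain with `C¹` boundary. -/
def IsC1Domain (n : ℕ) (Ω : Set (En n)) : Prop :=
  IsOpen Ω ∧ IsBounded Ω ∧ Ω.Nonempty ∧
  ∀ p ∈ frontier Ω, ∃ (φ : En n ≃ᵢ En n) (γ : EuclideanSpace ℝ (Fin (n - 1)) → ℝ)
    (r : ℝ), 0 < r ∧ ContDiff ℝ 1 γ ∧ φ p = 0 ∧
    (φ '' Ω) ∩ Metric.ball 0 r = {x : En n | lastCoord x < γ (frontCoords x)} ∩ Metric.ball 0 r

/-- The Laplacian `Δu = ∑ ∂²u/∂xᵢ²`. -/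
def lapl {n : ℕ} (u : En n → ℝ) (x : En n) : ℝ :=
  ∑ i : Fin n,
    fderiv ℝ (fun y => fderiv ℝ u y (EuclideanSpace.single i (1 : ℝ))) x
      (EuclideanSpace.single i (1 : ℝ))

/-- The surface measure `ω_{n-1}` of the unit sphere of `ℝ^n`. -/
def sphereSurf (n : ℕ) : ℝ := n * (volume (Metric.ball (0 : En n) 1)).toReal

/-- The unit vector `e_n`. -/
def eLast (n : ℕ) : En n :=
  if h : 0 < n then EuclideanSpace.single (⟨n - 1, Nat.sub_lt h Nat.one_pos⟩ : Fin n) (1 : ℝ)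
  else 0

/-- The halfspace `Π = {x_n < 0}`. -/
def halfSpaceNeg (n : ℕ) : Set (En n) := {x : En n | lastCoord x < 0}

end

lemma continuous_lastCoord {n : ℕ} : Continuous (lastCoord : En n → ℝ) := by
  unfold lastCoord
  split_ifs with h
  · fun_prop
  · fun_prop

lemma continuous_frontCoords {n : ℕ} :
    Continuous (frontCoords : En n → EuclideanSpace ℝ (Fin (n - 1))) := by
  unfold frontCoords
  apply (PiLp.continuous_toLp 2 _).comp
  fun_prop

/-- Boundary points of a Lipschitz domain are limits of points outside the closure: in the graph
chart, move up along the last coordinate axis. -/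
lemma exists_exterior_near {n : ℕ} (hn : 0 < n) {Ω : Set (En n)} (hΩ : IsLipschitzDomain n Ω)
    {p : En n} (hp : p ∈ frontier Ω) {ε : ℝ} (hε : 0 < ε) :
    ∃ x, x ∉ closure Ω ∧ dist x p < ε := by
  obtain ⟨hop, -, -, hL⟩ := hΩ
  obtain ⟨φ, γ, L, r, hr, hγ, hφ, hset⟩ := hL p hp
  have hpΩ : p ∉ Ω := by
    rw [hop.frontier_eq] at hp
    exact hp.2
  have h0 : (0 : En n) ∉ φ '' Ω := by
    rintro ⟨q, hq, hq0⟩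
    exact hpΩ (φ.injective (hq0.trans hφ.symm) ▸ hq)
  have hl0 : lastCoord (0 : En n) = 0 := by simp [lastCoord]
  have hγ0 : γ (frontCoords (0 : En n)) ≤ 0 := by
    by_contra! hc
    have : (0 : En n) ∈ {x : En n | lastCoord x < γ (frontCoords x)} ∩ Metric.ball 0 r :=
      ⟨by simpa [hl0] using hc, by simpa using hr⟩
    rw [← hset] at this
    exact h0 this.1
  set t : ℝ := min r ε / 2 with ht
  have hm : 0 < min r ε := lt_min hr hε
  have ht0 : 0 < t := by positivity
  have htr : t < r := by have := min_le_left r ε; linarith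
  have htε : t < ε := by have := min_le_right r ε; linarith
  set z : En n := EuclideanSpace.single (⟨n - 1, Nat.sub_lt hn Nat.one_pos⟩ : Fin n) t with hz
  have hzn : dist z 0 = t := by
    simp [hz, abs_of_pos ht0]
  have hzl : lastCoord z = t := by simp [lastCoord, hn, hz]
  have hzf : frontCoords z = frontCoords (0 : En n) := by
    ext i
    have : (Fin.castLE (Nat.sub_le n 1) i) ≠ (⟨n - 1, Nat.sub_lt hn Nat.one_pos⟩ : Fin n) := by
      intro h
      have h1 := congrArg Fin.val h
      have h2 := i.isLt
      simp at h1
      omega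
    simp [frontCoords, hz, this]
  set V : Set (En n) := {x | γ (frontCoords x) < lastCoord x} ∩ Metric.ball 0 r with hV
  have hVo : IsOpen V :=
    (isOpen_lt (hγ.continuous.comp continuous_frontCoords) continuous_lastCoord).inter
      Metric.isOpen_ball
  have hzV : z ∈ V := by
    refine ⟨?_, ?_⟩
    · change γ (frontCoords z) < lastCoord z
      rw [hzf, hzl]; linarith
    · rw [Metric.mem_ball, hzn]; exact htr
  refine ⟨φ.symm z, ?_, ?_⟩
  · intro hcl
    rw [mem_closure_iff] at hcl
    obtain ⟨q, hq1, hq2⟩ := hcl (φ ⁻¹' V) (hVo.preimage φ.continuous) (by simpa using hzV)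
    have : φ q ∈ {x : En n | lastCoord x < γ (frontCoords x)} ∩ Metric.ball 0 r := by
      rw [← hset]
      exact ⟨⟨q, hq2, rfl⟩, hq1.2⟩
    exact lt_asymm (show lastCoord (φ q) < _ from this.1) hq1.1
  · have : dist (φ.symm z) p = dist z 0 := by
      rw [← hφ, ← φ.dist_eq, φ.apply_symm_apply]
    rw [this, hzn]; exact htε

/-- A bounded nonempty open set has a boundary point at which it contains a tangent ball, here
encoded by the balls of all small radii `t` centred at distance `t` from `p`. -/
lemma exists_touching {n : ℕ} (hn : 0 < n) {Ω : Set (En n)} (ho : IsOpen Ω)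
    (hb : IsBounded Ω) (hne : Ω.Nonempty) :
    ∃ p ∈ frontier Ω, ∃ R > 0, ∀ t, 0 < t → t ≤ R →
      ∃ c, dist c p = t ∧ Metric.ball c t ⊆ Ω := by
  obtain ⟨y, hy⟩ := hne
  have : Nonempty (Fin n) := ⟨⟨0, hn⟩⟩
  have hcne : (Ωᶜ).Nonempty := by
    rw [Set.nonempty_compl]
    rintro rfl
    exact NoncompactSpace.noncompact_univ (X := En n)
      (Metric.isCompact_of_isClosed_isBounded isClosed_univ hb)
  obtain ⟨p, hp, hpd⟩ := ho.isClosed_compl.exists_infDist_eq_dist hcne y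
  have hyp : y ≠ p := fun h => hp (h ▸ hy)
  have hR : 0 < dist y p := dist_pos.2 hyp
  have hball : Metric.ball y (dist y p) ⊆ Ω := by
    intro q hq
    by_contra hqc
    have := Metric.infDist_le_dist_of_mem (x := y) (show q ∈ Ωᶜ from hqc)
    rw [hpd] at this
    rw [Metric.mem_ball, dist_comm] at hq
    linarith
  refine ⟨p, ?_, dist y p, hR, ?_⟩
  · rw [ho.frontier_eq]
    refine ⟨closure_mono hball ?_, hp⟩
    rw [closure_ball y hR.ne', Metric.mem_closedBall, dist_comm]
  · intro t ht htR
    refine ⟨AffineMap.lineMap p y (t / dist y p), ?_, ?_⟩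
    · rw [dist_lineMap_left, Real.norm_of_nonneg (by positivity), dist_comm p y]
      field_simp
    · refine (Metric.ball_subset_ball' ?_).trans hball
      rw [dist_lineMap_right, Real.norm_of_nonneg
        (by rw [sub_nonneg, div_le_one hR]; exact htR), dist_comm p y]
      field_simp
      linarith

section Kernel

variable {n : ℕ} {s : ℝ} {Ω : Set (En n)} {x : En n}

lemma nsKer_inv_nonneg (x y : En n) : 0 ≤ (nsKer n s x y)⁻¹ := by
  unfold nsKer; positivity

lemma nsKer_inv_le (hs : 0 < s) {d : ℝ} (hd : 0 < d) {x y : En n} (h : d ≤ dist x y) :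
    (nsKer n s x y)⁻¹ ≤ (d ^ ((n : ℝ) + 2 * s))⁻¹ := by
  unfold nsKer
  gcongr

lemma measurable_nsKer_inv (x : En n) : Measurable fun y => (nsKer n s x y)⁻¹ := by
  unfold nsKer
  fun_prop

lemma integrableOn_nsKer_inv (hs : 0 < s) (hb : IsBounded Ω) (hne : Ω.Nonempty)
    (ho : IsOpen Ω) (hx : x ∉ closure Ω) :
    IntegrableOn (fun y => (nsKer n s x y)⁻¹) Ω := by
  have hd : 0 < Metric.infDist x Ω :=
    (Metric.infDist_pos_iff_notMem_closure hne).1 hx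
  refine IntegrableOn.of_bound hb.measure_lt_top
    (measurable_nsKer_inv x).aestronglyMeasurable ((Metric.infDist x Ω) ^ ((n : ℝ) + 2 * s))⁻¹ ?_
  filter_upwards [ae_restrict_mem ho.measurableSet] with y hy
  rw [Real.norm_of_nonneg (nsKer_inv_nonneg x y)]
  exact nsKer_inv_le hs hd (Metric.infDist_le_dist_of_mem hy)

/-- On a ball of radius `t` at distance `t` from `p`, the kernel based at a point `x` within `t` of
`p` is at least `(3 t) ^ (-n - 2 s)`. -/
lemma kernel_mass_lower (hs : 0 < s) (hb : IsBounded Ω) (hne : Ω.Nonempty)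
    (ho : IsOpen Ω) (hx : x ∉ closure Ω) {p c : En n} {t : ℝ} (ht : 0 < t)
    (hc : dist c p = t) (hcΩ : Metric.ball c t ⊆ Ω) (hxp : dist x p < t) :
    volume.real (Metric.ball (0 : En n) 1) * (3 ^ ((n : ℝ) + 2 * s))⁻¹ * t ^ (-(2 * s)) ≤
      ∫ y in Ω, (nsKer n s x y)⁻¹ := by
  have hint := integrableOn_nsKer_inv hs hb hne ho hx
  have h1 : ∫ y in Metric.ball c t, (nsKer n s x y)⁻¹ ≤ ∫ y in Ω, (nsKer n s x y)⁻¹ :=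
    setIntegral_mono_set hint (Eventually.of_forall fun y => nsKer_inv_nonneg x y)
      hcΩ.eventuallyLE
  refine le_trans ?_ h1
  have h2 : ∫ y in Metric.ball c t, ((3 * t) ^ ((n : ℝ) + 2 * s))⁻¹ ≤
      ∫ y in Metric.ball c t, (nsKer n s x y)⁻¹ := by
    refine setIntegral_mono_on (integrableOn_const measure_ball_lt_top.ne) (hint.mono_set hcΩ)
      measurableSet_ball fun y hy => ?_
    have hyx : 0 < dist x y := by
      refine dist_pos.2 ?_
      rintro rfl
      exact hx (subset_closure (hcΩ hy))
    have hle : dist x y ≤ 3 * t := by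
      have a1 := dist_triangle x p y
      have a2 := dist_triangle p c y
      rw [dist_comm p c] at a2
      rw [Metric.mem_ball, dist_comm] at hy
      linarith
    unfold nsKer
    gcongr
  refine le_trans (le_of_eq ?_) h2
  rw [setIntegral_const, smul_eq_mul]
  have hv : volume.real (Metric.ball c t) = t ^ n * volume.real (Metric.ball (0 : En n) 1) := by
    simp only [Measure.real]
    rw [Measure.addHaar_ball_of_pos _ _ ht, ENNReal.toReal_mul,
      ENNReal.toReal_ofReal (by positivity)]
    simp
  rw [hv, Real.mul_rpow (by norm_num) ht.le, Real.rpow_add ht, Real.rpow_natCast,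
    Real.rpow_neg ht.le]
  field_simp

/-- If `Ñ_s u (x) = 1`, then the part of the mass of the kernel where `|u| ≤ 1/2` is absorbed, and
the remaining part, at distance at least `δ` from `p`, is bounded uniformly for `x` near `p`. -/
lemma kernel_mass_upper (hs : 0 < s) (hb : IsBounded Ω) (hne : Ω.Nonempty)
    (ho : IsOpen Ω) (hx : x ∉ closure Ω) {u : En n → ℝ} (hu : Continuous u) (hux : u x = 0)
    (hN : NsTilde n s Ω u x = 1) {p : En n} {δ M : ℝ} (hδ : 0 < δ) (hM : ∀ y ∈ Ω, |u y| ≤ M)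
    (hup : ∀ y, dist y p < δ → |u y| ≤ 1 / 2) (hxp : dist x p < δ / 2) :
    ∫ y in Ω, (nsKer n s x y)⁻¹ ≤
      2 * (volume.real Ω * (M * ((δ / 2) ^ ((n : ℝ) + 2 * s))⁻¹)) := by
  have hint := integrableOn_nsKer_inv hs hb hne ho hx
  have hM0 : 0 ≤ M := by
    obtain ⟨y, hy⟩ := hne
    exact (abs_nonneg _).trans (hM y hy)
  have hK : ∫ y in Ω, -u y * (nsKer n s x y)⁻¹ = ∫ y in Ω, (nsKer n s x y)⁻¹ := by
    unfold NsTilde NsD at hN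
    have hden : cns n s * ∫ y in Ω, (nsKer n s x y)⁻¹ ≠ 0 := by
      intro h0
      rw [h0] at hN
      simp at hN
    rw [div_eq_one_iff_eq hden] at hN
    have := mul_left_cancel₀ (left_ne_zero_of_mul hden) hN
    simpa [hux, div_eq_mul_inv] using this
  have hintu : IntegrableOn (fun y => -u y * (nsKer n s x y)⁻¹) Ω := by
    refine Integrable.bdd_mul (c := M) hint hu.neg.aestronglyMeasurable ?_
    filter_upwards [ae_restrict_mem ho.measurableSet] with y hy
    simpa using hM y hy
  have hle : ∫ y in Ω, -u y * (nsKer n s x y)⁻¹ ≤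
      ∫ y in Ω, (1 / 2 * (nsKer n s x y)⁻¹ + M * ((δ / 2) ^ ((n : ℝ) + 2 * s))⁻¹) := by
    refine setIntegral_mono_on hintu
      ((hint.const_mul _).add (integrableOn_const hb.measure_lt_top.ne)) ho.measurableSet
      fun y hy => ?_
    have hk := nsKer_inv_nonneg (s := s) x y
    have hc : 0 ≤ M * ((δ / 2) ^ ((n : ℝ) + 2 * s))⁻¹ := by positivity
    by_cases hyp : dist y p < δ
    · have : -u y ≤ 1 / 2 := (neg_le_abs _).trans (hup y hyp)
      have := mul_le_mul_of_nonneg_right this hk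
      linarith
    · have hd : δ / 2 ≤ dist x y := by
        have := dist_triangle y x p
        rw [dist_comm y x] at this
        linarith
      have h1 : -u y ≤ M := (neg_le_abs _).trans (hM y hy)
      have h2 := mul_le_mul h1 (nsKer_inv_le (n := n) hs (half_pos hδ) hd) hk hM0
      linarith
  rw [hK, integral_add (hint.const_mul _) (integrableOn_const hb.measure_lt_top.ne),
    integral_const_mul, setIntegral_const, smul_eq_mul] at hle
  linarith

end Kernel

-- STATEMENT 19
theorem no_overdetermined_solution (n : ℕ) (hn : 0 < n) (s : ℝ) (hs : s ∈ Set.Ioo (0 : ℝ) 1)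
    (Ω : Set (En n)) (hΩ : IsLipschitzDomain n Ω) :
    ¬∃ u : En n → ℝ, Continuous u ∧ (∀ x, x ∉ Ω → u x = 0) ∧
      ∀ x ∉ closure Ω, NsTilde n s Ω u x = 1 := by
  rintro ⟨u, hu, hu0, hN⟩
  obtain ⟨ho, hb, hne, -⟩ := id hΩ
  have hs0 : 0 < s := hs.1
  obtain ⟨p, hp, R, hR, htouch⟩ := exists_touching hn ho hb hne
  have hup : u p = 0 := hu0 p (by rw [ho.frontier_eq] at hp; exact hp.2)
  obtain ⟨M, hM⟩ := hb.isCompact_closure.exists_bound_of_continuousOn hu.continuousOn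
  obtain ⟨δ, hδ, hδu⟩ := Metric.continuousAt_iff.1 hu.continuousAt (1 / 2) (by norm_num)
  set B : ℝ := 2 * (volume.real Ω * (M * ((δ / 2) ^ ((n : ℝ) + 2 * s))⁻¹))
  set C : ℝ := volume.real (Metric.ball (0 : En n) 1) * (3 ^ ((n : ℝ) + 2 * s))⁻¹
  have hC : 0 < C := by
    have : 0 < volume.real (Metric.ball (0 : En n) 1) :=
      ENNReal.toReal_pos (Metric.measure_ball_pos _ _ one_pos).ne' measure_ball_lt_top.ne
    positivity
  have hlim : Tendsto (fun t : ℝ => C * t ^ (-(2 * s))) (𝓝[>] 0) atTop :=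
    (tendsto_rpow_neg_nhdsGT_zero (by linarith)).const_mul_atTop hC
  obtain ⟨t, hBt, ht0, htR⟩ :=
    ((hlim.eventually_gt_atTop B).and (Ioc_mem_nhdsGT hR)).exists
  obtain ⟨c, hc, hcΩ⟩ := htouch t ht0 htR
  obtain ⟨x, hx, hxp⟩ := exists_exterior_near hn hΩ hp (lt_min ht0 (half_pos hδ))
  have h1 := kernel_mass_lower hs0 hb hne ho hx ht0 hc hcΩ (hxp.trans_le (min_le_left _ _))
  have h2 := kernel_mass_upper hs0 hb hne ho hx hu (hu0 x fun h => hx (subset_closure h))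
    (hN x hx) hδ (fun y hy => hM y (subset_closure hy))
    (fun y hy => by simpa [hup] using (hδu hy).le) (hxp.trans_le (min_le_right _ _))
  exact absurd (h1.trans h2) (not_le.2 hBt)
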